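/- arXiv:2605.08026 — 2 statements merged into one kernel-verified Lean document; each statement's English description precedes it below -/
import Mathlib

section
/- Let x̄ be a local minimizer of (P) such that F is continuously differentiable on a neighborhood of x̄, let GGCQ hold at x̄, and fix d ∈ C(x̄) ∩ 𝕊. Assume that Γ is convex locally around F(x̄), i.e., there is a neighborhood V of F(x̄) such that Γ ∩ V is convex, and that the set-valued mapping u ↦ {F'(x̄)u} − T_Γ(F(x̄)) from ℝ^n to ℝ^ℓ is metrically subregular in direction d at (0, 0). Then x̄ is M-stationary in direction d. -/
open Filter Topology Metric Set
open scoped RealInnerProductSpace Pointwise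

noncomputable section

/-- Euclidean space `ℝ^n`. -/
abbrev Eu (n : ℕ) := EuclideanSpace ℝ (Fin n)

section Cones

variable {H : Type*} [NormedAddCommGroup H] [InnerProductSpace ℝ H]

/-- Tangent (Bouligand) cone to `Ω` at `x` (empty if `x ∉ Ω`). -/
def tanCone (Ω : Set H) (x : H) : Set H :=
  {d | x ∈ Ω ∧ ∃ (dk : ℕ → H) (tk : ℕ → ℝ),
    Tendsto dk atTop (𝓝 d) ∧ (∀ k, 0 < tk k) ∧ Tendsto tk atTop (𝓝 0) ∧
    ∀ k, x + tk k • dk k ∈ Ω}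

/-- Polar cone of a set. -/
def polarCone (C : Set H) : Set H := {y | ∀ x ∈ C, ⟪x, y⟫ ≤ 0}

/-- Regular (Fréchet) normal cone: polar of the tangent cone (empty if `x ∉ Ω`). -/
def regNormal (Ω : Set H) (x : H) : Set H :=
  {η | x ∈ Ω ∧ η ∈ polarCone (tanCone Ω x)}

/-- Limiting (Mordukhovich) normal cone (empty if `x ∉ Ω`). -/
def limNormal (Ω : Set H) (x : H) : Set H :=
  {η | x ∈ Ω ∧ ∃ (xk ηk : ℕ → H),
    Tendsto xk atTop (𝓝 x) ∧ Tendsto ηk atTop (𝓝 η) ∧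
    ∀ k, ηk k ∈ regNormal Ω (xk k)}

/-- Directional limiting normal cone to `Ω` at `x` in direction `d`. -/
def dirLimNormal (Ω : Set H) (x d : H) : Set H :=
  {η | x ∈ Ω ∧ ∃ (dk : ℕ → H) (tk : ℕ → ℝ) (ηk : ℕ → H),
    Tendsto dk atTop (𝓝 d) ∧ (∀ k, 0 < tk k) ∧ Tendsto tk atTop (𝓝 0) ∧
    Tendsto ηk atTop (𝓝 η) ∧
    ∀ k, ηk k ∈ regNormal Ω (x + tk k • dk k)}

/-- The pair `(ξ, r)` as an element of the ℓ²-product `H ×₂ ℝ`. -/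
def pl2 (ξ : H) (r : ℝ) : WithLp 2 (H × ℝ) := (WithLp.equiv 2 (H × ℝ)).symm (ξ, r)

/-- Epigraph of `φ` as a subset of the ℓ²-product `H ×₂ ℝ`. -/
def epigraphSet (φ : H → ℝ) : Set (WithLp 2 (H × ℝ)) :=
  {p | φ ((WithLp.equiv 2 (H × ℝ)) p).1 ≤ ((WithLp.equiv 2 (H × ℝ)) p).2}

/-- Limiting subdifferential of `φ` at `x`. -/
def limSubdiff (φ : H → ℝ) (x : H) : Set H :=
  {ξ | pl2 ξ (-1) ∈ limNormal (epigraphSet φ) (pl2 x (φ x))}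

/-- Directional limiting subdifferential of `φ` at `x` in direction `d`, where `φd`
denotes the directional derivative `φ'(x; d)`. -/
def dirLimSubdiff (φ : H → ℝ) (x d : H) (φd : ℝ) : Set H :=
  {ξ | pl2 ξ (-1) ∈ dirLimNormal (epigraphSet φ) (pl2 x (φ x)) (pl2 d φd)}

/-- Directional neighborhood `B_{ε,δ}(d)`. -/
def dirNbhd (d : H) (ε δ : ℝ) : Set H :=
  {y | ‖y‖ ≤ ε ∧ ‖‖d‖ • y - ‖y‖ • d‖ ≤ δ * (‖y‖ * ‖d‖)}

end Cones

section Problem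

variable {n l : ℕ}

/-- `F' x d` is the directional derivative of `F` at `x` in direction `d`. -/
def IsDirDeriv (F : Eu n → Eu l) (F' : Eu n → Eu n → Eu l) : Prop :=
  ∀ x d : Eu n,
    Tendsto (fun t : ℝ => t⁻¹ • (F (x + t • d) - F x)) (𝓝[>] (0:ℝ)) (𝓝 (F' x d))

/-- Limiting subdifferential of the scalarization `⟨λ, F⟩` at `x`. -/
def scalSubdiff (F : Eu n → Eu l) (lam : Eu l) (x : Eu n) : Set (Eu n) :=
  limSubdiff (fun y => ⟪lam, F y⟫) x

/-- Directional limiting subdifferential of `⟨λ, F⟩` at `x` in direction `d`. -/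
def scalDirSubdiff (F : Eu n → Eu l) (F' : Eu n → Eu n → Eu l) (lam : Eu l)
    (x d : Eu n) : Set (Eu n) :=
  dirLimSubdiff (fun y => ⟪lam, F y⟫) x d ⟪lam, F' x d⟫

/-- Linearization cone. -/
def linCone (F : Eu n → Eu l) (F' : Eu n → Eu n → Eu l) (Γ : Set (Eu l)) (x : Eu n) :
    Set (Eu n) :=
  {d | F' x d ∈ tanCone Γ (F x)}

/-- Explicit critical cone `C(x̄)`. -/
def critCone (f : Eu n → ℝ) (F : Eu n → Eu l) (F' : Eu n → Eu n → Eu l)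
    (Γ : Set (Eu l)) (x : Eu n) : Set (Eu n) :=
  {d | ⟪gradient f x, d⟫ ≤ 0 ∧ d ∈ linCone F F' Γ x}

/-- Implicit critical cone `Ĉ(x̄)`. -/
def implCritCone (f : Eu n → ℝ) (F : Eu n → Eu l) (Γ : Set (Eu l)) (x : Eu n) :
    Set (Eu n) :=
  {d | ⟪gradient f x, d⟫ ≤ 0 ∧ d ∈ tanCone (F ⁻¹' Γ) x}

/-- M-stationarity. -/
def MStat (f : Eu n → ℝ) (F : Eu n → Eu l) (Γ : Set (Eu l)) (x : Eu n) : Prop :=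
  ∃ lam : Eu l, -gradient f x ∈ scalSubdiff F lam x ∧ lam ∈ limNormal Γ (F x)

/-- M-stationarity in direction `d`. -/
def MStatDir (f : Eu n → ℝ) (F : Eu n → Eu l) (F' : Eu n → Eu n → Eu l)
    (Γ : Set (Eu l)) (x d : Eu n) : Prop :=
  ∃ lam : Eu l, -gradient f x ∈ scalDirSubdiff F F' lam x d ∧
    lam ∈ dirLimNormal Γ (F x) (F' x d)

/-- Metric subregularity constraint qualification in direction `d`. -/
def MSCQdir (F : Eu n → Eu l) (Γ : Set (Eu l)) (x d : Eu n) : Prop :=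
  ∃ ε > (0:ℝ), ∃ δ > (0:ℝ), ∃ κ > (0:ℝ), ∀ y : Eu n, y - x ∈ dirNbhd d ε δ →
    infDist y (F ⁻¹' Γ) ≤ κ * infDist (F y) Γ

/-- Metric subregularity constraint qualification. -/
def MSCQ (F : Eu n → Eu l) (Γ : Set (Eu l)) (x : Eu n) : Prop := MSCQdir F Γ x 0

/-- AM-stationary sequence w.r.t. `x`. -/
def AMSeq (f : Eu n → ℝ) (F : Eu n → Eu l) (Γ : Set (Eu l)) (x : Eu n)
    (xk : ℕ → Eu n) (lamk δk : ℕ → Eu l) (εk : ℕ → Eu n) : Prop :=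
  (∀ k, εk k - gradient f (xk k) ∈ scalSubdiff F (lamk k) (xk k)) ∧
  (∀ k, lamk k ∈ limNormal Γ (F (xk k) - δk k)) ∧
  Tendsto xk atTop (𝓝 x) ∧ Tendsto δk atTop (𝓝 0) ∧ Tendsto εk atTop (𝓝 0)

/-- AM-stationarity. -/
def AMStat (f : Eu n → ℝ) (F : Eu n → Eu l) (Γ : Set (Eu l)) (x : Eu n) : Prop :=
  ∃ xk lamk δk εk, AMSeq f F Γ x xk lamk δk εk

/-- AM-stationary sequence w.r.t. `x` in direction `d`. -/
def AMSeqDir (f : Eu n → ℝ) (F : Eu n → Eu l) (Γ : Set (Eu l)) (x : Eu n)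
    (xk : ℕ → Eu n) (lamk δk : ℕ → Eu l) (εk : ℕ → Eu n) (d : Eu n) : Prop :=
  AMSeq f F Γ x xk lamk δk εk ∧
  (∀ k, xk k ≠ x) ∧
  Tendsto (fun k => ‖xk k - x‖⁻¹ • (xk k - x)) atTop (𝓝 d) ∧
  Tendsto (fun k => ‖xk k - x‖⁻¹ • δk k) atTop (𝓝 (0 : Eu l)) ∧
  (∃ θ : ℕ → ℝ, (∀ k, 0 ≤ θ k) ∧ Tendsto θ atTop (𝓝 0) ∧
    ∀ k, ‖‖δk k‖ • lamk k - ‖lamk k‖ • δk k‖ ≤ ‖δk k‖ * ‖lamk k‖ * θ k) ∧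
  (∃ M : ℝ, ∀ k, ‖δk k‖ * ‖lamk k‖ / ‖xk k - x‖ ≤ M)

/-- AM-stationarity in direction `d`. -/
def AMStatDir (f : Eu n → ℝ) (F : Eu n → Eu l) (Γ : Set (Eu l)) (x d : Eu n) : Prop :=
  ∃ xk lamk δk εk, AMSeqDir f F Γ x xk lamk δk εk d

/-- The Minkowski sum `Σ_i |λ_i| ∂(sgn(λ_i) F_i)(x; d)`. -/
def dirSumSet (F : Eu n → Eu l) (F' : Eu n → Eu n → Eu l) (lam : Eu l) (x d : Eu n) :
    Set (Eu n) :=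
  {v | ∃ s : Fin l → Eu n,
    (∀ i, s i ∈ |lam i| • dirLimSubdiff (fun y => Real.sign (lam i) * F y i) x d
        (Real.sign (lam i) * F' x d i)) ∧
    v = ∑ i, s i}

/-- Standing sum-rule assumption. -/
def SumRule (F : Eu n → Eu l) (F' : Eu n → Eu n → Eu l) : Prop :=
  ∀ (x d : Eu n) (lam : Eu l), scalDirSubdiff F F' lam x d = dirSumSet F F' lam x d

end Problem

/-! Write `A` for the derivative of `F` at `x` and `K` for the tangent cone of `Γ` at `F x`, which
is a closed convex cone. Local minimality and GGCQ put `g = -∇f(x)` into the polar of `A⁻¹ K`, and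
criticality of `d` forces `⟪d, g⟫ = 0`. Subregularity near `d` therefore bounds `⟪u, g⟫` by a
multiple of `dist(A u, K)`, first for `u` close to the ray through `d` and then for all `u`, since
adding a multiple of `d` to `u` preserves `⟪u, g⟫` and does not increase the distance. As the
distance to `K` is sublinear, the Hahn-Banach theorem turns this bound into a multiplier `λ` in the
polar of `K` with `A† λ = g`.

Since `λ` is normal to `Γ` at `y = F x` and orthogonal to the tangent direction `v = A d`, it is a
directional limiting normal: if `y + t_k v_k ∈ Γ` with `v_k → v`, projecting `y + t_k (v_k + λ)`
onto `Γ` yields points `y + t_k (v_k - e_k)` with normals `λ + e_k`, where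
`‖e_k‖² ≤ -⟪v_k, λ⟫ → -⟪v, λ⟫ = 0`. -/

section NormalCones

variable {H : Type*} [NormedAddCommGroup H] [InnerProductSpace ℝ H] {Ω V : Set H} {x d η : H}

lemma mem_tanCone_of_eventually (hx : x ∈ Ω) {dk : ℕ → H} {tk : ℕ → ℝ}
    (hdk : Tendsto dk atTop (𝓝 d)) (htk : ∀ k, 0 < tk k) (htk0 : Tendsto tk atTop (𝓝 0))
    (hmem : ∀ᶠ k in atTop, x + tk k • dk k ∈ Ω) : d ∈ tanCone Ω x := by
  obtain ⟨N, hN⟩ := eventually_atTop.1 hmem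
  exact ⟨hx, fun k => dk (k + N), fun k => tk (k + N), (tendsto_add_atTop_iff_nat N).2 hdk,
    fun k => htk _, (tendsto_add_atTop_iff_nat N).2 htk0, fun k => hN _ (Nat.le_add_left N k)⟩

lemma mem_dirLimNormal_of_eventually (hx : x ∈ Ω) {dk ηk : ℕ → H} {tk : ℕ → ℝ}
    (hdk : Tendsto dk atTop (𝓝 d)) (htk : ∀ k, 0 < tk k) (htk0 : Tendsto tk atTop (𝓝 0))
    (hηk : Tendsto ηk atTop (𝓝 η))
    (hmem : ∀ᶠ k in atTop, ηk k ∈ regNormal Ω (x + tk k • dk k)) : η ∈ dirLimNormal Ω x d := by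
  obtain ⟨N, hN⟩ := eventually_atTop.1 hmem
  exact ⟨hx, fun k => dk (k + N), fun k => tk (k + N), fun k => ηk (k + N),
    (tendsto_add_atTop_iff_nat N).2 hdk, fun k => htk _, (tendsto_add_atTop_iff_nat N).2 htk0,
    (tendsto_add_atTop_iff_nat N).2 hηk, fun k => hN _ (Nat.le_add_left N k)⟩

lemma tendsto_add_smul_nhds {dk : ℕ → H} {tk : ℕ → ℝ} (x : H)
    (hdk : Tendsto dk atTop (𝓝 d)) (htk0 : Tendsto tk atTop (𝓝 0)) :
    Tendsto (fun k => x + tk k • dk k) atTop (𝓝 x) := by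
  simpa only [zero_smul, add_zero] using (htk0.smul hdk).const_add x

lemma tanCone_inter_of_mem_nhds (hV : V ∈ 𝓝 x) : tanCone (Ω ∩ V) x = tanCone Ω x := by
  apply Subset.antisymm
  · rintro d ⟨hx, dk, tk, hdk, htk, htk0, hmem⟩
    exact ⟨hx.1, dk, tk, hdk, htk, htk0, fun k => (hmem k).1⟩
  · rintro d ⟨hx, dk, tk, hdk, htk, htk0, hmem⟩
    refine mem_tanCone_of_eventually ⟨hx, mem_of_mem_nhds hV⟩ hdk htk htk0 ?_
    filter_upwards [tendsto_add_smul_nhds x hdk htk0 hV] with k hk using ⟨hmem k, hk⟩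

lemma regNormal_inter_of_mem_nhds (hV : V ∈ 𝓝 x) : regNormal (Ω ∩ V) x = regNormal Ω x := by
  simp only [regNormal, tanCone_inter_of_mem_nhds hV, mem_inter_iff, mem_of_mem_nhds hV, and_true]

lemma dirLimNormal_inter_subset_of_mem_nhds (hV : V ∈ 𝓝 x) :
    dirLimNormal (Ω ∩ V) x d ⊆ dirLimNormal Ω x d := by
  rintro η ⟨hx, dk, tk, ηk, hdk, htk, htk0, hηk, hmem⟩
  refine mem_dirLimNormal_of_eventually hx.1 hdk htk htk0 hηk ?_
  filter_upwards [(tendsto_add_smul_nhds x hdk htk0).eventually (eventually_mem_nhds_iff.2 hV)]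
    with k hk
  exact regNormal_inter_of_mem_nhds hk ▸ hmem k

lemma tanCone_subset_posTangentConeAt (Ω : Set H) (x : H) :
    tanCone Ω x ⊆ posTangentConeAt Ω x := by
  rintro d ⟨-, dk, tk, hdk, htk, htk0, hmem⟩
  refine mem_tangentConeAt_of_seq atTop (fun k => Real.toNNReal (tk k)⁻¹) (fun k => tk k • dk k)
    (by simpa only [zero_smul] using htk0.smul hdk) (.of_forall hmem) (hdk.congr fun k => ?_)
  rw [NNReal.smul_def, Real.coe_toNNReal _ (inv_nonneg.2 (htk k).le), inv_smul_smul₀ (htk k).ne']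

lemma mem_regNormal_of_isLocalMaxOn {φ : H → ℝ} (hx : x ∈ Ω) (hmax : IsLocalMaxOn φ Ω x)
    (hφ : HasFDerivAt φ (innerSL ℝ η) x) : η ∈ regNormal Ω x := by
  refine ⟨hx, fun v hv => ?_⟩
  rw [real_inner_comm]
  exact hmax.hasFDerivWithinAt_nonpos hφ.hasFDerivWithinAt (tanCone_subset_posTangentConeAt Ω x hv)

end NormalCones

section ConvexSets

variable {H : Type*} [NormedAddCommGroup H] [InnerProductSpace ℝ H] {Ω : Set H} {x y v η : H}

lemma tanCone_eq_closure_of_convex (hΩ : Convex ℝ Ω) (hx : x ∈ Ω) :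
    tanCone Ω x = closure {v | ∃ t > (0 : ℝ), x + t • v ∈ Ω} := by
  apply Subset.antisymm
  · rintro d ⟨-, dk, tk, hdk, htk, -, hmem⟩
    exact mem_closure_of_tendsto hdk (.of_forall fun k => ⟨tk k, htk k, hmem k⟩)
  · intro d hd
    obtain ⟨dk, hdk_mem, hdk⟩ := mem_closure_iff_seq_limit.1 hd
    choose c hc hmem using hdk_mem
    refine ⟨hx, dk, fun k => min (c k) (1 / ((k : ℝ) + 1)), hdk,
      fun k => lt_min (hc k) (by positivity), ?_, fun k => ?_⟩
    · exact squeeze_zero (fun k => le_min (hc k).le (by positivity)) (fun k => min_le_right _ _)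
        tendsto_one_div_add_atTop_nhds_zero_nat
    · have hratio : min (c k) (1 / ((k : ℝ) + 1)) / c k ∈ Icc (0 : ℝ) 1 :=
        ⟨div_nonneg (le_min (hc k).le (by positivity)) (hc k).le,
          div_le_one_of_le₀ (min_le_left _ _) (hc k).le⟩
      simpa only [smul_smul, div_mul_cancel₀ _ (hc k).ne'] using
        hΩ.add_smul_mem hx (hmem k) hratio

lemma exists_pointedCone_coe_eq_tanCone (hΩ : Convex ℝ Ω) (hx : x ∈ Ω) :
    ∃ K : PointedCone ℝ H, (K : Set H) = tanCone Ω x := by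
  have hconv : Convex ℝ ((fun v => x + v) ⁻¹' Ω) := hΩ.translate_preimage_right x
  have hzero : (0 : H) ∈ (fun v => x + v) ⁻¹' Ω := by simpa only [mem_preimage, add_zero] using hx
  have hpointed : (ConvexCone.hull ℝ ((fun v => x + v) ⁻¹' Ω)).Pointed :=
    ConvexCone.subset_hull hzero
  refine ⟨((ConvexCone.hull ℝ _).toPointedCone hpointed).closure, ?_⟩
  rw [PointedCone.coe_closure, tanCone_eq_closure_of_convex hΩ hx]
  congr 1
  ext v
  refine (ConvexCone.mem_hull_of_convex hconv).trans ⟨?_, ?_⟩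
  · rintro ⟨r, hr, hv⟩
    exact ⟨r⁻¹, inv_pos.2 hr, (mem_smul_set_iff_inv_smul_mem₀ hr.ne' _ _).1 hv⟩
  · rintro ⟨t, ht, hv⟩
    exact ⟨t⁻¹, inv_pos.2 ht, (mem_inv_smul_set_iff₀ ht.ne' _ _).2 hv⟩

lemma sub_mem_tanCone_of_convex (hΩ : Convex ℝ Ω) (hx : x ∈ Ω) (hy : y ∈ Ω) :
    y - x ∈ tanCone Ω x := by
  rw [tanCone_eq_closure_of_convex hΩ hx]
  exact subset_closure ⟨1, one_pos, by simpa only [one_smul, add_sub_cancel] using hy⟩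

lemma mem_regNormal_iff_of_convex (hΩ : Convex ℝ Ω) :
    η ∈ regNormal Ω x ↔ x ∈ Ω ∧ ∀ y ∈ Ω, ⟪y - x, η⟫ ≤ 0 := by
  refine ⟨fun h => ⟨h.1, fun y hy => h.2 _ (sub_mem_tanCone_of_convex hΩ h.1 hy)⟩, ?_⟩
  rintro ⟨hx, h⟩
  refine mem_regNormal_of_isLocalMaxOn (φ := innerSL ℝ η) hx ?_ (innerSL ℝ η).hasFDerivAt
  refine IsMaxOn.localize (isMaxOn_iff.2 fun y hy => ?_)
  simpa only [innerSL_apply_apply, real_inner_comm, inner_sub_left, sub_nonpos] using h y hy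

lemma exists_sub_mem_regNormal (hne : Ω.Nonempty) (hcompl : IsComplete Ω) (hΩ : Convex ℝ Ω)
    (z : H) : ∃ p, z - p ∈ regNormal Ω p := by
  obtain ⟨p, hp, hmin⟩ := exists_norm_eq_iInf_of_complete_convex hne hcompl hΩ z
  refine ⟨p, (mem_regNormal_iff_of_convex hΩ).2 ⟨hp, fun c hc => ?_⟩⟩
  rw [real_inner_comm]
  exact (norm_eq_iInf_iff_real_inner_le_zero hΩ hp).1 hmin c hc

lemma smul_mem_regNormal {c : ℝ} (hc : 0 ≤ c) (hη : η ∈ regNormal Ω x) : c • η ∈ regNormal Ω x :=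
  ⟨hη.1, fun v hv => by
    rw [real_inner_smul_right]; exact mul_nonpos_of_nonneg_of_nonpos hc (hη.2 v hv)⟩

lemma exists_perturbed_regNormal (hcompl : IsComplete Ω) (hΩ : Convex ℝ Ω)
    (hη : η ∈ regNormal Ω y) {t : ℝ} (ht : 0 < t) (hmem : y + t • v ∈ Ω) :
    ∃ e, ‖e‖ ^ 2 ≤ -⟪v, η⟫ ∧ η + e ∈ regNormal Ω (y + t • (v - e)) := by
  obtain ⟨p, hp⟩ := exists_sub_mem_regNormal ⟨y, hη.1⟩ hcompl hΩ (y + t • (v + η))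
  obtain ⟨e, rfl⟩ : ∃ e, p = y + t • (v - e) :=
    ⟨v - t⁻¹ • (p - y), by rw [sub_sub_cancel, smul_inv_smul₀ ht.ne', add_sub_cancel]⟩
  have hnormal : η + e ∈ regNormal Ω (y + t • (v - e)) := by
    have hscaled := smul_mem_regNormal (inv_nonneg.2 ht.le) hp
    rwa [show y + t • (v + η) - (y + t • (v - e)) = t • (η + e) by module,
      inv_smul_smul₀ ht.ne'] at hscaled
  refine ⟨e, ?_, hnormal⟩
  have hbase : ⟪v, η⟫ ≤ ⟪e, η⟫ := by
    have h := ((mem_regNormal_iff_of_convex hΩ).1 hη).2 _ hnormal.1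
    rw [add_sub_cancel_left, real_inner_smul_left, inner_sub_left] at h
    exact sub_nonpos.1 (nonpos_of_mul_nonpos_right h ht)
  have hperturbed : ⟪e, η⟫ + ‖e‖ ^ 2 ≤ 0 := by
    have h := ((mem_regNormal_iff_of_convex hΩ).1 hnormal).2 _ hmem
    rw [show y + t • v - (y + t • (v - e)) = t • e by module, real_inner_smul_left,
      inner_add_right, real_inner_self_eq_norm_sq] at h
    exact nonpos_of_mul_nonpos_right h ht
  linarith

theorem mem_dirLimNormal_of_convex (hcompl : IsComplete Ω) (hΩ : Convex ℝ Ω)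
    (hv : v ∈ tanCone Ω y) (hη : η ∈ regNormal Ω y) (horth : ⟪v, η⟫ = 0) :
    η ∈ dirLimNormal Ω y v := by
  obtain ⟨hy, vk, tk, hvk, htk, htk0, hmem⟩ := hv
  choose e he_norm he_mem using
    fun k => exists_perturbed_regNormal hcompl hΩ hη (htk k) (hmem k)
  have he : Tendsto e atTop (𝓝 0) := by
    have hinner : Tendsto (fun k => √(-⟪vk k, η⟫)) atTop (𝓝 0) := by
      simpa only [horth, neg_zero, Real.sqrt_zero] using
        (hvk.inner (tendsto_const_nhds (x := η))).neg.sqrt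
    exact squeeze_zero_norm (fun k => Real.le_sqrt_of_sq_le (he_norm k)) hinner
  exact ⟨hy, fun k => vk k - e k, tk, fun k => η + e k, by simpa only [sub_zero] using hvk.sub he,
    htk, htk0, by simpa only [add_zero] using he.const_add η, he_mem⟩

lemma exists_nhds_isClosed_convex_inter (hcl : IsClosed Ω)
    (hconv : ∃ V ∈ 𝓝 y, Convex ℝ (Ω ∩ V)) :
    ∃ V ∈ 𝓝 y, IsClosed (Ω ∩ V) ∧ Convex ℝ (Ω ∩ V) := by
  obtain ⟨V, hV, hΩV⟩ := hconv
  obtain ⟨r, hr, hrV⟩ := nhds_basis_closedBall.mem_iff.1 hV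
  refine ⟨closedBall y r, closedBall_mem_nhds y hr, hcl.inter isClosed_closedBall, ?_⟩
  rw [← inter_eq_self_of_subset_right hrV, ← inter_assoc]
  exact hΩV.inter (convex_closedBall y r)

end ConvexSets

lemma infDist_zero_sub {G : Type*} [NormedAddCommGroup G] (T : Set G) (y : G) :
    infDist 0 {v | ∃ w ∈ T, v = y - w} = infDist y T := by
  have himage : {v | ∃ w ∈ T, v = y - w} = IsometryEquiv.subLeft y '' T := by
    ext v
    simp only [mem_ofPred_eq, mem_image, IsometryEquiv.subLeft_apply, eq_comm]
  rw [himage, ← sub_self y]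
  exact infDist_image (IsometryEquiv.subLeft y).isometry

section DistanceToCone

variable {E G : Type*} [NormedAddCommGroup E] [NormedSpace ℝ E]
  [NormedAddCommGroup G] [NormedSpace ℝ G]

lemma infDist_smul_pointedCone (K : PointedCone ℝ G) {c : ℝ} (hc : 0 < c) (v : G) :
    infDist (c • v) K = c * infDist v K := by
  have hK : c • (K : Set G) = K := by
    ext w
    rw [mem_smul_set_iff_inv_smul_mem₀ hc.ne']
    exact K.smul_mem_iff (inv_pos.2 hc)
  conv_lhs => rw [← hK]
  rw [infDist_smul₀ hc.ne', Real.norm_of_nonneg hc.le]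

lemma infDist_add_le_pointedCone (K : PointedCone ℝ G) (v w : G) :
    infDist (v + w) K ≤ infDist v K + infDist w K := by
  have hne : (K : Set G).Nonempty := ⟨0, K.zero_mem⟩
  refine le_of_forall_pos_lt_add fun ε hε => ?_
  obtain ⟨p, hp, hvp⟩ := (infDist_lt_iff hne).1 (lt_add_of_pos_right (infDist v K) (half_pos hε))
  obtain ⟨q, hq, hwq⟩ := (infDist_lt_iff hne).1 (lt_add_of_pos_right (infDist w K) (half_pos hε))
  calc infDist (v + w) K ≤ dist (v + w) (p + q) := infDist_le_dist_of_mem (K.add_mem hp hq)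
    _ ≤ dist v p + dist w q := dist_add_add_le v w p q
    _ < infDist v K + infDist w K + ε := by linarith

lemma exists_comp_eq_of_le_infDist (K : PointedCone ℝ G) (A : E →ₗ[ℝ] G) (φ : E →ₗ[ℝ] ℝ) {r : ℝ}
    (h : ∀ u, φ u ≤ r * infDist (A u) K) : ∃ ψ : G →ₗ[ℝ] ℝ, ψ ∘ₗ A = φ := by
  have hle : ∀ u ∈ LinearMap.ker A, φ u ≤ 0 := fun u hu => by
    simpa only [LinearMap.mem_ker.1 hu, infDist_zero_of_mem K.zero_mem, mul_zero] using h u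
  have hker : φ ∈ (LinearMap.ker A).dualAnnihilator :=
    (Submodule.mem_dualAnnihilator φ).2 fun u hu =>
      (hle u hu).antisymm (by simpa only [map_neg, neg_nonpos] using hle (-u) (neg_mem hu))
  rwa [← LinearMap.range_dualMap_eq_dualAnnihilator_ker] at hker

theorem exists_dual_nonpos_of_le_infDist (K : PointedCone ℝ G) (A : E →ₗ[ℝ] G) (φ : E →ₗ[ℝ] ℝ)
    {r : ℝ} (hr : 0 ≤ r) (h : ∀ u, φ u ≤ r * infDist (A u) K) :
    ∃ ψ : StrongDual ℝ G, (∀ w ∈ K, ψ w ≤ 0) ∧ ∀ u, ψ (A u) = φ u := by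
  obtain ⟨φA, rfl⟩ := exists_comp_eq_of_le_infDist K A φ h
  obtain ⟨ψ, hψ_ext, hψ_le⟩ := exists_extension_of_le_sublinear
    ⟨LinearMap.range A, φA.domRestrict (LinearMap.range A)⟩ (fun v => r * infDist v K)
    (fun c hc v => by rw [infDist_smul_pointedCone K hc, mul_left_comm])
    (fun v w => by
      rw [← mul_add]; exact mul_le_mul_of_nonneg_left (infDist_add_le_pointedCone K v w) hr)
    (by rintro ⟨-, u, rfl⟩; exact h u)
  have hnorm : ∀ v, ψ v ≤ r * ‖v‖ := fun v => (hψ_le v).trans <| by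
    gcongr
    simpa only [dist_zero_right] using infDist_le_dist_of_mem (x := v) K.zero_mem
  refine ⟨ψ.mkContinuous r fun v => abs_le.2 ⟨?_, hnorm v⟩, fun w hw => ?_, fun u => ?_⟩
  · simpa only [map_neg, norm_neg, neg_le] using hnorm (-v)
  · exact (hψ_le w).trans_eq (by rw [infDist_zero_of_mem hw, mul_zero])
  · exact hψ_ext ⟨A u, u, rfl⟩

end DistanceToCone

section Multipliers

variable {E G : Type*} [NormedAddCommGroup E] [InnerProductSpace ℝ E]
  [NormedAddCommGroup G] [InnerProductSpace ℝ G]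

theorem exists_mem_polarCone_adjoint_eq [CompleteSpace E] [CompleteSpace G] (K : PointedCone ℝ G)
    (A : E →L[ℝ] G) (g : E) {r : ℝ} (hr : 0 ≤ r) (h : ∀ u, ⟪u, g⟫ ≤ r * infDist (A u) K) :
    ∃ lam ∈ polarCone (K : Set G), ContinuousLinearMap.adjoint A lam = g := by
  obtain ⟨ψ, hψ_nonpos, hψ_comp⟩ := exists_dual_nonpos_of_le_infDist K (A : E →ₗ[ℝ] G)
    (innerSL ℝ g : E →ₗ[ℝ] ℝ) hr fun u => (real_inner_comm u g).trans_le (h u)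
  refine ⟨(InnerProductSpace.toDual ℝ G).symm ψ, fun w hw => ?_,
    ext_inner_right ℝ fun u => ?_⟩
  · rw [real_inner_comm, InnerProductSpace.toDual_symm_apply]
    exact hψ_nonpos w hw
  · rw [ContinuousLinearMap.adjoint_inner_left, InnerProductSpace.toDual_symm_apply]
    exact hψ_comp u

lemma inner_le_norm_mul_infDist_of_mem_polarCone {L : Set E} (hL : L.Nonempty) {g : E}
    (hg : g ∈ polarCone L) (y : E) : ⟪y, g⟫ ≤ ‖g‖ * infDist y L := by
  have := hL.to_subtype
  rw [infDist_eq_iInf, Real.mul_iInf_of_nonneg (norm_nonneg g)]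
  refine le_ciInf fun w => ?_
  calc ⟪y, g⟫ = ⟪y - w, g⟫ + ⟪(w : E), g⟫ := by rw [inner_sub_left, sub_add_cancel]
    _ ≤ ⟪y - w, g⟫ := add_le_of_nonpos_right (hg w w.2)
    _ ≤ ‖g‖ * dist y w := by
      rw [dist_eq_norm, mul_comm]; exact real_inner_le_norm _ _

lemma exists_smul_add_smul_mem_dirNbhd {ε δ : ℝ} (hε : 0 < ε) (hδ : 0 < δ) (d u : E) :
    ∃ c > (0 : ℝ), ∃ s > (0 : ℝ), c • (d + s • u) ∈ dirNbhd d ε δ := by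
  obtain ⟨s, hs, hangle⟩ : ∃ s > (0 : ℝ),
      ‖‖d‖ • (d + s • u) - ‖d + s • u‖ • d‖ ≤ δ * (‖d + s • u‖ * ‖d‖) := by
    rcases eq_or_ne d 0 with rfl | hd
    · exact ⟨1, one_pos, by simp⟩
    · have hlt : ∀ᶠ s : ℝ in 𝓝 0,
          ‖‖d‖ • (d + s • u) - ‖d + s • u‖ • d‖ < δ * (‖d + s • u‖ * ‖d‖) := by
        refine ContinuousAt.eventually_lt (by fun_prop) (by fun_prop) ?_
        simp only [zero_smul, add_zero, sub_self, norm_zero]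
        positivity
      obtain ⟨s, hs_lt, hs⟩ :=
        ((hlt.filter_mono nhdsWithin_le_nhds).and (self_mem_nhdsWithin (s := Ioi 0))).exists
      exact ⟨s, hs, hs_lt.le⟩
  have hc : 0 < ε / (‖d + s • u‖ + 1) := by positivity
  refine ⟨ε / (‖d + s • u‖ + 1), hc, s, hs, ?_, ?_⟩
  · rw [norm_smul, Real.norm_of_nonneg hc.le, div_mul_eq_mul_div, div_le_iff₀ (by positivity)]
    gcongr
    exact le_add_of_nonneg_right zero_le_one
  · rw [norm_smul, Real.norm_of_nonneg hc.le, smul_comm, mul_smul, ← smul_sub, norm_smul,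
      Real.norm_of_nonneg hc.le, mul_assoc, mul_left_comm δ]
    gcongr

-- The estimate for `u` is the one at `c • (d + s • u)`, a point of the directional neighborhood:
-- `d` adds nothing to the inner product with `g`, and `A d ∈ K` adds nothing to the distance.
theorem inner_le_mul_infDist_of_subregular (K : PointedCone ℝ G) (A : E →L[ℝ] G) {d g : E}
    (hd : A d ∈ K) (hg : g ∈ polarCone (A ⁻¹' K)) (hdg : ⟪d, g⟫ = 0) {ε δ κ : ℝ} (hε : 0 < ε)
    (hδ : 0 < δ) (hκ : 0 ≤ κ)
    (hsub : ∀ u ∈ dirNbhd d ε δ, infDist u (A ⁻¹' K) ≤ κ * infDist (A u) K) (u : E) :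
    ⟪u, g⟫ ≤ ‖g‖ * κ * infDist (A u) K := by
  obtain ⟨c, hc, s, hs, hmem⟩ := exists_smul_add_smul_mem_dirNbhd hε hδ d u
  have hdist : infDist (A (c • (d + s • u))) K ≤ c * (s * infDist (A u) K) := by
    rw [map_smul, map_add, map_smul, infDist_smul_pointedCone K hc]
    gcongr
    calc infDist (A d + s • A u) K ≤ infDist (A d) K + infDist (s • A u) K :=
          infDist_add_le_pointedCone K _ _
      _ = s * infDist (A u) K := by
          rw [infDist_zero_of_mem hd, zero_add, infDist_smul_pointedCone K hs]
  have hscaled : c * (s * ⟪u, g⟫) ≤ c * (s * (‖g‖ * κ * infDist (A u) K)) :=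
    calc c * (s * ⟪u, g⟫) = ⟪c • (d + s • u), g⟫ := by
          rw [real_inner_smul_left, inner_add_left, real_inner_smul_left, hdg, zero_add]
      _ ≤ ‖g‖ * infDist (c • (d + s • u)) (A ⁻¹' K) :=
          inner_le_norm_mul_infDist_of_mem_polarCone ⟨d, hd⟩ hg _
      _ ≤ ‖g‖ * (κ * (c * (s * infDist (A u) K))) := by
          gcongr; exact (hsub _ hmem).trans (by gcongr)
      _ = c * (s * (‖g‖ * κ * infDist (A u) K)) := by ring
  exact le_of_mul_le_mul_left (le_of_mul_le_mul_left hscaled hc) hs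

end Multipliers

lemma tendsto_pl2 {H α : Type*} [NormedAddCommGroup H] {l : Filter α} {u : α → H} {r : α → ℝ}
    {v : H} {s : ℝ} (hu : Tendsto u l (𝓝 v)) (hr : Tendsto r l (𝓝 s)) :
    Tendsto (fun k => pl2 (u k) (r k)) l (𝓝 (pl2 v s)) :=
  ((WithLp.prod_continuous_toLp 2 H ℝ).tendsto (v, s)).comp (hu.prodMk_nhds hr)

section SmoothSubdifferential

variable {H : Type*} [NormedAddCommGroup H] [InnerProductSpace ℝ H] {φ : H → ℝ}

lemma pl2_add_smul_pl2 (v w : H) (r s t : ℝ) :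
    pl2 v r + t • pl2 w s = pl2 (v + t • w) (r + t * s) := rfl

-- `(z, φ z)` maximizes `(y, α) ↦ φ y - α` over the epigraph, and `(ξ, -1)` is the gradient there.
lemma pl2_neg_one_mem_regNormal_epigraphSet {z ξ : H} (hφ : HasFDerivAt φ (innerSL ℝ ξ) z) :
    pl2 ξ (-1) ∈ regNormal (epigraphSet φ) (pl2 z (φ z)) := by
  refine mem_regNormal_of_isLocalMaxOn (φ := fun p => φ p.fst - p.snd) (le_refl (φ z)) ?_ ?_
  · refine IsMaxOn.localize (isMaxOn_iff.2 fun p hp => ?_)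
    calc φ p.fst - p.snd ≤ 0 := sub_nonpos.2 hp
      _ = φ (pl2 z (φ z)).fst - (pl2 z (φ z)).snd := (sub_self (φ z)).symm
  · have hfst : HasFDerivAt (fun p : WithLp 2 (H × ℝ) => φ p.fst)
        ((innerSL ℝ ξ).comp (WithLp.fstL 2 ℝ H ℝ)) (pl2 z (φ z)) :=
      HasFDerivAt.comp (pl2 z (φ z)) hφ (WithLp.fstL 2 ℝ H ℝ).hasFDerivAt
    refine (hfst.sub (WithLp.sndL 2 ℝ H ℝ).hasFDerivAt).congr_fderiv ?_
    ext p
    simp [pl2, WithLp.prod_inner_apply, sub_eq_add_neg]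

theorem gradient_mem_dirLimSubdiff [CompleteSpace H] {x : H} (hφ : ContDiffAt ℝ 1 φ x) (d : H) :
    gradient φ x ∈ dirLimSubdiff φ x d ⟪gradient φ x, d⟫ := by
  obtain ⟨t, -, ht, ht0⟩ := exists_seq_strictAnti_tendsto (0 : ℝ)
  have hline : Tendsto (fun k => x + t k • d) atTop (𝓝 x) :=
    tendsto_add_smul_nhds x tendsto_const_nhds ht0
  have hquot : Tendsto (fun k => (t k)⁻¹ • (φ (x + t k • d) - φ x)) atTop
      (𝓝 ⟪gradient φ x, d⟫) := by
    have hderiv := (hφ.differentiableAt one_ne_zero).hasFDerivAt.hasLineDerivAt d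
    rw [inner_gradient_left]
    exact hderiv.tendsto_slope_zero_right.comp (tendsto_nhdsWithin_iff.2 ⟨ht0, .of_forall ht⟩)
  have hgrad : Tendsto (fun k => gradient φ (x + t k • d)) atTop (𝓝 (gradient φ x)) :=
    ((InnerProductSpace.toDual ℝ H).symm.continuous.continuousAt.comp
      (hφ.continuousAt_fderiv one_ne_zero)).tendsto.comp hline
  refine mem_dirLimNormal_of_eventually (le_refl (φ x)) (tendsto_pl2 tendsto_const_nhds hquot) ht
    ht0 (tendsto_pl2 hgrad tendsto_const_nhds) ?_
  filter_upwards [hline.eventually (hφ.eventually (by simp))] with k hk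
  have hbase : pl2 x (φ x) + t k • pl2 d ((t k)⁻¹ • (φ (x + t k • d) - φ x)) =
      pl2 (x + t k • d) (φ (x + t k • d)) := by
    rw [pl2_add_smul_pl2, smul_eq_mul, mul_inv_cancel_left₀ (ht k).ne', add_sub_cancel]
  rw [hbase]
  exact pl2_neg_one_mem_regNormal_epigraphSet
    (hk.differentiableAt one_ne_zero).hasGradientAt.hasFDerivAt

lemma hasGradientAt_inner_comp {G : Type*} [NormedAddCommGroup G] [InnerProductSpace ℝ G]
    [CompleteSpace H] [CompleteSpace G] {F : H → G} {A : H →L[ℝ] G} {x : H}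
    (hF : HasFDerivAt F A x) (lam : G) :
    HasGradientAt (fun y => ⟪lam, F y⟫) (ContinuousLinearMap.adjoint A lam) x := by
  rw [hasGradientAt_iff_hasFDerivAt]
  refine ((innerSL ℝ lam).hasFDerivAt.comp x hF).congr_fderiv ?_
  ext u
  simp [ContinuousLinearMap.adjoint_inner_left]

lemma adjoint_fderiv_mem_dirLimSubdiff {G : Type*} [NormedAddCommGroup G] [InnerProductSpace ℝ G]
    [CompleteSpace H] [CompleteSpace G] {F : H → G} {x : H} (hF : ContDiffAt ℝ 1 F x) (lam : G)
    (d : H) : ContinuousLinearMap.adjoint (fderiv ℝ F x) lam ∈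
      dirLimSubdiff (fun y => ⟪lam, F y⟫) x d ⟪lam, fderiv ℝ F x d⟫ := by
  have hgrad := hasGradientAt_inner_comp (hF.differentiableAt one_ne_zero).hasFDerivAt lam
  rw [← ContinuousLinearMap.adjoint_inner_left, ← hgrad.gradient]
  exact gradient_mem_dirLimSubdiff (contDiffAt_const.inner ℝ hF) d

end SmoothSubdifferential

lemma IsDirDeriv.eq_fderiv {n l : ℕ} {F : Eu n → Eu l} {F' : Eu n → Eu n → Eu l}
    (hF' : IsDirDeriv F F') {x : Eu n} (hF : DifferentiableAt ℝ F x) (d : Eu n) :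
    F' x d = fderiv ℝ F x d :=
  tendsto_nhds_unique (hF' x d) (hF.hasFDerivAt.hasLineDerivAt d).tendsto_slope_zero_right

theorem stmt9_general {E G : Type*} [NormedAddCommGroup E] [InnerProductSpace ℝ E] [CompleteSpace E]
    [NormedAddCommGroup G] [InnerProductSpace ℝ G] [CompleteSpace G]
    {f : E → ℝ} {F : E → G} {Γ : Set G} {x d : E}
    (hf : DifferentiableAt ℝ f x) (hF : ContDiffAt ℝ 1 F x) (hΓcl : IsClosed Γ)
    (hfeas : F x ∈ Γ) (hmin : IsLocalMinOn f (F ⁻¹' Γ) x)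
    (hGGCQ : regNormal (F ⁻¹' Γ) x ⊆ polarCone {w | fderiv ℝ F x w ∈ tanCone Γ (F x)})
    (hd_descent : ⟪gradient f x, d⟫ ≤ 0) (hd_lin : fderiv ℝ F x d ∈ tanCone Γ (F x))
    (hconv : ∃ V ∈ 𝓝 (F x), Convex ℝ (Γ ∩ V))
    (hsubreg : ∃ ε > (0 : ℝ), ∃ δ > (0 : ℝ), ∃ κ > (0 : ℝ), ∀ u ∈ dirNbhd d ε δ,
      infDist u {w | fderiv ℝ F x w ∈ tanCone Γ (F x)} ≤
        κ * infDist (0 : G) {v | ∃ w ∈ tanCone Γ (F x), v = fderiv ℝ F x u - w}) :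
    ∃ lam : G, -gradient f x ∈ dirLimSubdiff (fun y => ⟪lam, F y⟫) x d ⟪lam, fderiv ℝ F x d⟫ ∧
      lam ∈ dirLimNormal Γ (F x) (fderiv ℝ F x d) := by
  obtain ⟨V, hV, hΓVcl, hΓVconv⟩ := exists_nhds_isClosed_convex_inter hΓcl hconv
  obtain ⟨ε, hε, δ, hδ, κ, hκ, hsub⟩ := hsubreg
  have hFxV : F x ∈ Γ ∩ V := ⟨hfeas, mem_of_mem_nhds hV⟩
  obtain ⟨K, hK⟩ := exists_pointedCone_coe_eq_tanCone hΓVconv hFxV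
  rw [tanCone_inter_of_mem_nhds hV] at hK
  simp only [infDist_zero_sub, ← hK] at hsub hGGCQ hd_lin
  set A := fderiv ℝ F x
  set g := -gradient f x with hg
  have hg_polar : g ∈ polarCone (A ⁻¹' K) := by
    refine hGGCQ (mem_regNormal_of_isLocalMaxOn hfeas hmin.neg ?_)
    rw [hg, map_neg]
    exact hf.hasGradientAt.hasFDerivAt.neg
  have hdg : ⟪d, g⟫ = 0 :=
    (hg_polar d hd_lin).antisymm (by rwa [hg, inner_neg_right, real_inner_comm, neg_nonneg])
  obtain ⟨lam, hlam, hadjoint⟩ := exists_mem_polarCone_adjoint_eq K A g (by positivity)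
    (inner_le_mul_infDist_of_subregular K A hd_lin hg_polar hdg hε hδ hκ.le hsub)
  refine ⟨lam, ?_, ?_⟩
  · exact hadjoint ▸ adjoint_fderiv_mem_dirLimSubdiff hF lam d
  · refine dirLimNormal_inter_subset_of_mem_nhds hV ?_
    refine mem_dirLimNormal_of_convex hΓVcl.isComplete hΓVconv ?_ ⟨hFxV, ?_⟩ ?_
    · rwa [tanCone_inter_of_mem_nhds hV, ← hK]
    · rwa [tanCone_inter_of_mem_nhds hV, ← hK]
    · rw [← ContinuousLinearMap.adjoint_inner_right, hadjoint, hdg]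

/-- Directional M-stationarity of local minimizers under GGCQ, local convexity of `Γ`,
and directional metric subregularity of the linearized feasibility mapping. -/
theorem stmt9 {n l : ℕ}
    (f : Eu n → ℝ) (hf : ContDiff ℝ 1 f)
    (F : Eu n → Eu l) (F' : Eu n → Eu n → Eu l)
    (hLip : LocallyLipschitz F) (hF' : IsDirDeriv F F')
    (Γ : Set (Eu l)) (hΓne : Γ.Nonempty) (hΓcl : IsClosed Γ)
    (x : Eu n) (hfeas : F x ∈ Γ) (hmin : IsLocalMinOn f (F ⁻¹' Γ) x)
    (hFsm : ∃ U ∈ 𝓝 x, ContDiffOn ℝ 1 F U)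
    (hGGCQ : regNormal (F ⁻¹' Γ) x = polarCone (linCone F F' Γ x))
    (d : Eu n) (hd : d ∈ critCone f F F' Γ x) (hd1 : ‖d‖ = 1)
    (hconv : ∃ V ∈ 𝓝 (F x), Convex ℝ (Γ ∩ V))
    (hsubreg : ∃ ε > (0:ℝ), ∃ δ > (0:ℝ), ∃ κ > (0:ℝ), ∀ u : Eu n, u ∈ dirNbhd d ε δ →
      infDist u {w : Eu n | fderiv ℝ F x w ∈ tanCone Γ (F x)} ≤
        κ * infDist (0 : Eu l) {v : Eu l | ∃ w ∈ tanCone Γ (F x), v = fderiv ℝ F x u - w}) :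
    MStatDir f F F' Γ x d := by
  obtain ⟨U, hU, hFU⟩ := hFsm
  have hF : ContDiffAt ℝ 1 F x := hFU.contDiffAt hU
  have hF'x : F' x = fderiv ℝ F x := funext (hF'.eq_fderiv (hF.differentiableAt one_ne_zero))
  simp only [critCone, linCone, MStatDir, scalDirSubdiff, hF'x] at hGGCQ hd ⊢
  exact stmt9_general (hf.differentiable one_ne_zero x) hF hΓcl hfeas hmin hGGCQ.subset hd.1 hd.2
    hconv hsubreg

end
end

section
/- Let x̄ be feasible for (P), let d ∈ C(x̄) ∩ 𝕊, and let {(x^k, λ^k, δ^k, ε^k)} be an AM-stationary sequence w.r.t. x̄ in direction d. If the sequence {λ^k} is bounded, then x̄ is M-stationary in direction d. -/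
open Filter Topology Metric Set
open scoped RealInnerProductSpace Pointwise

noncomputable section

/-!
All limits are taken along the filter `dirNhds x d` of points approaching `x` in direction `d`.
Membership in `dirLimNormal Ω x d` means that regular normals close to `η` occur frequently along
this filter, and a diagonal argument allows regular normals to be replaced by limiting ones.

If `‖μ - λ‖` is small, a subgradient of `⟨μ, F⟩` is an approximate subgradient of `⟨λ, F⟩`, because
`⟨μ - λ, F⟩` has a small Lipschitz constant. Minimizing a quadratic perturbation of `⟨λ, F⟩` over a
small ball turns it into an exact regular subgradient at a nearby point. Hence the multipliers may
vary along the sequence, and it suffices to pass to an ultrafilter along which they converge.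
-/

section DirectionalLimits

variable {E G : Type*} [NormedAddCommGroup E] [NormedSpace ℝ E]
  [NormedAddCommGroup G] [NormedSpace ℝ G] {x d : E} {v : G} {F : E → G}

/-- The filter of points approaching `x` in direction `d`: the points `x + t • d'` with `t ↓ 0` and
`d' → d`. For `d = 0` it is `𝓝 x`. -/
def dirNhds (x d : E) : Filter E :=
  map (fun p : ℝ × E => x + p.1 • p.2) (𝓝[>] 0 ×ˢ 𝓝 d)

/-- The directional derivative of `F` at `x` in direction `d` in the sense of Hadamard is `v`: the
direction may vary while the step size tends to zero. -/
def HasHadamardDirDeriv (F : E → G) (v : G) (x d : E) : Prop :=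
  Tendsto (fun p : ℝ × E => p.1⁻¹ • (F (x + p.1 • p.2) - F x)) (𝓝[>] 0 ×ˢ 𝓝 d) (𝓝 v)

lemma tendsto_add_smul_nhds_s12 (x d : E) :
    Tendsto (fun p : ℝ × E => x + p.1 • p.2) (𝓝[>] 0 ×ˢ 𝓝 d) (𝓝 x) := by
  have ht : Tendsto (fun p : ℝ × E => p.1) (𝓝[>] 0 ×ˢ 𝓝 d) (𝓝 0) :=
    tendsto_fst.mono_right nhdsWithin_le_nhds
  simpa using (ht.smul tendsto_snd).const_add x

lemma dirNhds_le_nhds (x d : E) : dirNhds x d ≤ 𝓝 x :=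
  tendsto_add_smul_nhds_s12 x d

lemma tendsto_dirNhds {ι : Type*} {l : Filter ι} {t : ι → ℝ} {y : ι → E}
    (ht : Tendsto t l (𝓝[>] 0)) (hy : Tendsto (fun k => (t k)⁻¹ • (y k - x)) l (𝓝 d)) :
    Tendsto y l (dirNhds x d) := by
  refine (tendsto_map.comp (ht.prodMk hy)).congr' ?_
  filter_upwards [ht.eventually self_mem_nhdsWithin] with k hk
  have htk : t k ≠ 0 := ne_of_gt hk
  simp [htk]

lemma frequently_dirNhds_of_frequently_nhds {Q : E → Prop}
    (h : ∃ᶠ y in dirNhds x d, ∃ᶠ z in 𝓝 y, Q z) : ∃ᶠ y in dirNhds x d, Q y := by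
  contrapose! h
  obtain ⟨pt, hpt, pd, hpd, hQ⟩ := eventually_prod_iff.1 (eventually_map.1 h)
  refine eventually_map.2 ?_
  filter_upwards [(hpt.and self_mem_nhdsWithin).prod_mk hpd.eventually_nhds] with p hp
  have hp₁ : p.1 ≠ 0 := ne_of_gt hp.1.2
  have hcont : Tendsto (fun z => p.1⁻¹ • (z - x)) (𝓝 (x + p.1 • p.2)) (𝓝 p.2) := by
    have : Continuous fun z => p.1⁻¹ • (z - x) := by fun_prop
    simpa [hp₁] using this.tendsto (x + p.1 • p.2)
  filter_upwards [hcont.eventually hp.2] with z hz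
  simpa [hp₁] using hQ hp.1.1 hz

/-- A diagonal argument: `ys k → x` in direction `d`, but the elements of `S` near `ηs k` are only
found at points close to `ys k`. -/
lemma frequently_mem_dirNhds_prod_nhds {ι T : Type*} [PseudoMetricSpace T] {l : Filter ι}
    {S : E → Set T} {ys : ι → E} {ηs : ι → T} {η : T} (hy : Tendsto ys l (dirNhds x d))
    (hη : Tendsto ηs l (𝓝 η))
    (h : ∀ r > 0, ∃ᶠ k in l, ∃ᶠ y in 𝓝 (ys k), (ball (ηs k) r ∩ S y).Nonempty) :
    ∃ᶠ p in dirNhds x d ×ˢ 𝓝 η, p.2 ∈ S p.1 := by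
  rw [((dirNhds x d).basis_sets.prod nhds_basis_ball).frequently_iff]
  rintro ⟨V, r⟩ ⟨hV, hr⟩
  have hnear : ∃ᶠ k in l, ∃ᶠ y in 𝓝 (ys k), (ball η r ∩ S y).Nonempty := by
    refine ((h (r / 2) (half_pos hr)).and_eventually
      (hη.eventually (ball_mem_nhds η (half_pos hr)))).mono fun k ⟨hk, hkη⟩ => hk.mono fun y => ?_
    exact Nonempty.mono (inter_subset_inter_left _
      (ball_subset_ball' (by linarith [mem_ball.1 hkη])))
  obtain ⟨y, ⟨η', hη', hS⟩, hyV⟩ :=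
    ((frequently_dirNhds_of_frequently_nhds (hy.frequently hnear)).and_eventually hV).exists
  exact ⟨(y, η'), ⟨hyV, hη'⟩, hS⟩

lemma hasHadamardDirDeriv_of_lipschitzOnWith {K : NNReal} {U : Set E}
    (hF : LipschitzOnWith K F U) (hU : U ∈ 𝓝 x)
    (hv : Tendsto (fun t : ℝ => t⁻¹ • (F (x + t • d) - F x)) (𝓝[>] 0) (𝓝 v)) :
    HasHadamardDirDeriv F v x d := by
  have hfixed : Tendsto (fun p : ℝ × E => p.1⁻¹ • (F (x + p.1 • d) - F x)) (𝓝[>] 0 ×ˢ 𝓝 d) (𝓝 v) :=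
    hv.comp tendsto_fst
  have hdiff : Tendsto (fun p : ℝ × E => p.1⁻¹ • (F (x + p.1 • p.2) - F (x + p.1 • d)))
      (𝓝[>] 0 ×ˢ 𝓝 d) (𝓝 0) := by
    have hbound : Tendsto (fun p : ℝ × E => K * ‖p.2 - d‖) (𝓝[>] 0 ×ˢ 𝓝 d) (𝓝 0) := by
      simpa using
        (((tendsto_snd (f := 𝓝[>] (0 : ℝ)) (g := 𝓝 d)).sub_const d).norm).const_mul (K : ℝ)
    have hmoving : ∀ᶠ p : ℝ × E in 𝓝[>] 0 ×ˢ 𝓝 d, x + p.1 • p.2 ∈ U :=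
      tendsto_add_smul_nhds_s12 x d hU
    have hstraight : ∀ᶠ p : ℝ × E in 𝓝[>] 0 ×ˢ 𝓝 d, x + p.1 • d ∈ U :=
      (tendsto_add_smul_nhds_s12 x d).comp (tendsto_fst.prodMk tendsto_const_nhds) hU
    refine squeeze_zero_norm' ?_ hbound
    filter_upwards [hmoving, hstraight, tendsto_fst.eventually self_mem_nhdsWithin]
      with p hp hpd (ht : 0 < p.1)
    have hLip := hF.norm_sub_le hp hpd
    rw [add_sub_add_left_eq_sub, ← smul_sub, norm_smul, Real.norm_of_nonneg ht.le] at hLip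
    rw [norm_smul, norm_inv, Real.norm_of_nonneg ht.le, inv_mul_le_iff₀ ht]
    linarith
  simpa [HasHadamardDirDeriv, ← smul_add] using hdiff.add hfixed

lemma HasHadamardDirDeriv.tendsto_comp {ι : Type*} {l : Filter ι} {t : ι → ℝ} {y : ι → E}
    (hF : HasHadamardDirDeriv F v x d) (ht : Tendsto t l (𝓝[>] 0))
    (hy : Tendsto (fun k => (t k)⁻¹ • (y k - x)) l (𝓝 d)) :
    Tendsto (fun k => (t k)⁻¹ • (F (y k) - F x)) l (𝓝 v) := by
  refine (Tendsto.comp hF (ht.prodMk hy)).congr' ?_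
  filter_upwards [ht.eventually self_mem_nhdsWithin] with k hk
  have htk : t k ≠ 0 := ne_of_gt hk
  simp [htk]

end DirectionalLimits

section NormalCones

variable {H : Type*} [NormedAddCommGroup H] [InnerProductSpace ℝ H] {Ω : Set H} {x d η : H}

lemma frequently_mem_regNormal_of_mem_limNormal (h : η ∈ limNormal Ω x) {r : ℝ} (hr : 0 < r) :
    ∃ᶠ y in 𝓝 x, (ball η r ∩ regNormal Ω y).Nonempty := by
  obtain ⟨-, ys, ηs, hy, hη, hmem⟩ := h
  refine hy.frequently (Eventually.frequently ?_)
  filter_upwards [hη.eventually (ball_mem_nhds η hr)] with k hk using ⟨ηs k, hk, hmem k⟩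

lemma mem_dirLimNormal_of_frequently_mem_regNormal (hx : x ∈ Ω)
    (h : ∃ᶠ p in dirNhds x d ×ˢ 𝓝 η, p.2 ∈ regNormal Ω p.1) : η ∈ dirLimNormal Ω x d := by
  rw [dirNhds, prod_map_left, frequently_map] at h
  have hpos : ∀ᶠ p : (ℝ × H) × H in (𝓝[>] 0 ×ˢ 𝓝 d) ×ˢ 𝓝 η, 0 < p.1.1 :=
    (tendsto_fst.comp tendsto_fst).eventually self_mem_nhdsWithin
  obtain ⟨p, hp, hmem⟩ := exists_seq_forall_of_frequently (h.and_eventually hpos)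
  exact ⟨hx, fun k => (p k).1.2, fun k => (p k).1.1, fun k => (p k).2,
    tendsto_snd.comp (tendsto_fst.comp hp), fun k => (hmem k).2,
    (tendsto_fst.comp (tendsto_fst.comp hp)).mono_right nhdsWithin_le_nhds,
    tendsto_snd.comp hp, fun k => (hmem k).1⟩

theorem mem_dirLimNormal_of_frequently_mem_limNormal {ι : Type*} {l : Filter ι} {ys ηs : ι → H}
    (hx : x ∈ Ω) (hy : Tendsto ys l (dirNhds x d)) (hη : Tendsto ηs l (𝓝 η))
    (h : ∃ᶠ k in l, ηs k ∈ limNormal Ω (ys k)) : η ∈ dirLimNormal Ω x d :=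
  mem_dirLimNormal_of_frequently_mem_regNormal hx <| frequently_mem_dirNhds_prod_nhds hy hη
    fun _ hr => h.mono fun _ hk => frequently_mem_regNormal_of_mem_limNormal hk hr

end NormalCones

section Subgradients

lemma continuous_pl2 {V : Type*} [NormedAddCommGroup V] :
    Continuous fun p : V × ℝ => pl2 p.1 p.2 :=
  WithLp.prod_continuous_toLp 2 V ℝ

variable {H : Type*} [NormedAddCommGroup H] [InnerProductSpace ℝ H] {φ : H → ℝ} {x z d ξ : H}
  {α c φd : ℝ}

/-- The regular (Fréchet) subdifferential, defined like `limSubdiff` through normals to the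
epigraph. -/
def regSubdiff (φ : H → ℝ) (x : H) : Set H :=
  {ξ | pl2 ξ (-1) ∈ regNormal (epigraphSet φ) (pl2 x (φ x))}

/-- The `c`-approximate Fréchet subdifferential: slopes of affine minorants of `φ` near `x`, exact
at `x`, up to an error `c * ‖y - x‖`. -/
def approxSubdiff (φ : H → ℝ) (c : ℝ) (x : H) : Set H :=
  {ξ | ∀ᶠ y in 𝓝 x, φ x + ⟪ξ, y - x⟫ - c * ‖y - x‖ ≤ φ y}

lemma inner_pl2 (a b : H) (r s : ℝ) : ⟪pl2 a r, pl2 b s⟫ = ⟪a, b⟫ + r * s := by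
  simp [pl2, WithLp.prod_inner_apply, mul_comm]

lemma HasHadamardDirDeriv.tendsto_graph (h : HasHadamardDirDeriv φ φd x d) :
    Tendsto (fun y => pl2 y (φ y)) (dirNhds x d) (dirNhds (pl2 x (φ x)) (pl2 d φd)) := by
  refine tendsto_map'_iff.2 (tendsto_dirNhds tendsto_fst ?_)
  refine ((continuous_pl2.tendsto (d, φd)).comp (tendsto_snd.prodMk_nhds h)).congr' ?_
  filter_upwards [tendsto_fst.eventually self_mem_nhdsWithin] with p hp
  have hp₁ : p.1 ≠ 0 := ne_of_gt hp
  refine WithLp.ofLp_injective 2 (Prod.ext ?_ rfl)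
  simp [pl2, hp₁]

lemma mem_dirLimSubdiff_of_frequently_mem_regSubdiff (hφ : HasHadamardDirDeriv φ φd x d)
    (h : ∃ᶠ p in dirNhds x d ×ˢ 𝓝 ξ, p.2 ∈ regSubdiff φ p.1) : ξ ∈ dirLimSubdiff φ x d φd := by
  have hcovector : Tendsto (fun ζ : H => pl2 ζ (-1)) (𝓝 ξ) (𝓝 (pl2 ξ (-1))) :=
    (continuous_pl2.comp (Continuous.prodMk_left (-1))).tendsto ξ
  exact mem_dirLimNormal_of_frequently_mem_regNormal (le_refl (φ x))
    ((hφ.tendsto_graph.prodMap hcovector).frequently h)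

lemma exists_mem_tanCone_of_not_mem_approxSubdiff [FiniteDimensional ℝ H] (hα : φ z ≤ α)
    (hξ : ξ ∉ approxSubdiff φ c z) :
    ∃ u, pl2 u (⟪ξ, u⟫ - c) ∈ tanCone (epigraphSet φ) (pl2 z α) := by
  obtain ⟨y, hy, hlt⟩ := exists_seq_forall_of_frequently (not_eventually.1 hξ)
  simp only [not_le] at hlt
  have hpos (k : ℕ) : 0 < ‖y k - z‖ := by
    rw [norm_pos_iff, sub_ne_zero]
    rintro hk
    simpa [hk] using hlt k
  set u : ℕ → H := fun k => ‖y k - z‖⁻¹ • (y k - z)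
  have hu (k : ℕ) : u k ∈ sphere (0 : H) 1 := by simp [u, norm_smul, (hpos k).ne']
  have hscale (k : ℕ) : ‖y k - z‖ • u k = y k - z := smul_inv_smul₀ (hpos k).ne' _
  have hnorm : Tendsto (fun k => ‖y k - z‖) atTop (𝓝 0) := by simpa using (hy.sub_const z).norm
  obtain ⟨u₀, -, g, hg, hlim⟩ := (isCompact_sphere (0 : H) 1).tendsto_subseq hu
  refine ⟨u₀, hα, fun k => pl2 (u (g k)) (⟪ξ, u (g k)⟫ - c), fun k => ‖y (g k) - z‖,
    (continuous_pl2.tendsto (u₀, ⟪ξ, u₀⟫ - c)).comp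
      (hlim.prodMk_nhds ((tendsto_const_nhds.inner hlim).sub_const c)),
    fun k => hpos _, hnorm.comp hg.tendsto_atTop, fun k => ?_⟩
  change φ (z + ‖y (g k) - z‖ • u (g k)) ≤ α + ‖y (g k) - z‖ * (⟪ξ, u (g k)⟫ - c)
  rw [mul_sub, ← real_inner_smul_right, hscale, add_sub_cancel]
  linarith [hlt (g k)]

lemma smul_mem_approxSubdiff_of_mem_regNormal [FiniteDimensional ℝ H] {s : ℝ} (hs : 0 < s)
    (h : pl2 ξ (-s) ∈ regNormal (epigraphSet φ) (pl2 z α)) (hc : 0 < c) :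
    s⁻¹ • ξ ∈ approxSubdiff φ c z := by
  by_contra hcon
  obtain ⟨u, hu⟩ := exists_mem_tanCone_of_not_mem_approxSubdiff h.1 hcon
  have hpolar : ⟪pl2 u (⟪s⁻¹ • ξ, u⟫ - c), pl2 ξ (-s)⟫ ≤ 0 := h.2 _ hu
  have hvalue : ⟪pl2 u (⟪s⁻¹ • ξ, u⟫ - c), pl2 ξ (-s)⟫ = c * s := by
    rw [inner_pl2, real_inner_smul_left, real_inner_comm u ξ]
    field_simp
    ring
  exact hpolar.not_gt (hvalue ▸ mul_pos hc hs)

lemma mem_regSubdiff_of_forall_mem_approxSubdiff (h : ∀ c > 0, ξ ∈ approxSubdiff φ c x) :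
    ξ ∈ regSubdiff φ x := by
  refine ⟨le_refl (φ x), ?_⟩
  rintro p ⟨-, ps, t, hp, ht, ht₀, hmem⟩
  have hfst : Tendsto (fun k => (ps k).fst) atTop (𝓝 p.fst) :=
    ((WithLp.continuous_fst 2 H ℝ).tendsto p).comp hp
  have hsnd : Tendsto (fun k => (ps k).snd) atTop (𝓝 p.snd) :=
    ((WithLp.continuous_snd 2 H ℝ).tendsto p).comp hp
  have hbase : Tendsto (fun k => x + t k • (ps k).fst) atTop (𝓝 x) := by
    simpa using (ht₀.smul hfst).const_add x
  have hslope (c : ℝ) (hc : 0 < c) : ⟪ξ, p.fst⟫ - c * ‖p.fst‖ ≤ p.snd := by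
    refine le_of_tendsto_of_tendsto
      ((tendsto_const_nhds.inner hfst).sub (hfst.norm.const_mul c)) hsnd ?_
    filter_upwards [hbase.eventually (h c hc)] with k hk
    have hepi : φ (x + t k • (ps k).fst) ≤ φ x + t k * (ps k).snd := hmem k
    rw [add_sub_cancel_left, inner_smul_right, norm_smul, Real.norm_of_nonneg (ht k).le] at hk
    refine le_of_mul_le_mul_left ?_ (ht k)
    linarith
  have hlimit : ⟪ξ, p.fst⟫ ≤ p.snd := by
    have : Tendsto (fun c : ℝ => ⟪ξ, p.fst⟫ - c * ‖p.fst‖) (𝓝[>] 0) (𝓝 ⟪ξ, p.fst⟫) := by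
      have hcont : Continuous fun c : ℝ => ⟪ξ, p.fst⟫ - c * ‖p.fst‖ := by fun_prop
      simpa using (hcont.tendsto 0).mono_left nhdsWithin_le_nhds
    exact le_of_tendsto this (eventually_mem_nhdsWithin.mono hslope)
  change ⟪pl2 p.fst p.snd, pl2 ξ (-1)⟫ ≤ 0
  rw [inner_pl2, real_inner_comm]
  linarith

lemma neg_mem_regSubdiff_of_isLocalMin_add [CompleteSpace H] {g : H → ℝ} {ζ : H}
    (hg : HasGradientAt g ζ x) (hmin : IsLocalMin (fun y => φ y + g y) x) :
    -ζ ∈ regSubdiff φ x := by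
  refine mem_regSubdiff_of_forall_mem_approxSubdiff fun c hc => ?_
  filter_upwards [hmin, (hasGradientAt_iff_isLittleO.1 hg).bound hc] with y hy hbound
  rw [inner_neg_left]
  linarith [le_of_abs_le hbound]

lemma hasGradientAt_mul_norm_sub_sq_sub_inner [CompleteSpace H] (K : ℝ) (ξ z y : H) :
    HasGradientAt (fun w => K * ‖w - z‖ ^ 2 - ⟪ξ, w - z⟫) ((2 * K) • (y - z) - ξ) y := by
  have hsub : HasFDerivAt (fun w => w - z) (.id ℝ H) y := (hasFDerivAt_id y).sub_const z
  have hlin := (innerSL ℝ ξ).hasFDerivAt.comp y hsub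
  refine hasGradientAt_iff_hasFDerivAt.2 (((hsub.norm_sq.const_mul K).sub hlin).congr_fderiv ?_)
  ext w
  simp
  ring

lemma exists_isLocalMin_add_of_mem_approxSubdiff [FiniteDimensional ℝ H] {U : Set H}
    (hφ : LowerSemicontinuousOn φ U) (hU : U ∈ 𝓝 z) (hξ : ξ ∈ approxSubdiff φ c z) (hc : 0 < c)
    {ρ : ℝ} (hρ : 0 < ρ) :
    ∃ y ∈ ball z ρ, ∃ K ≥ 0, K * ‖y - z‖ ≤ c ∧
      IsLocalMin (fun w => φ w + (K * ‖w - z‖ ^ 2 - ⟪ξ, w - z⟫)) y := by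
  obtain ⟨r, hr, hball⟩ := nhds_basis_closedBall.eventually_iff.1
    (hξ.and (inter_mem hU (ball_mem_nhds z hρ)))
  -- With `K = 2 * c / r` the quadratic term beats the error `c * ‖y - z‖` on the sphere of radius `r`.
  set K : ℝ := 2 * c / r
  have hK : 0 < K := by positivity
  have hlsc : LowerSemicontinuousOn (fun w => φ w + (K * ‖w - z‖ ^ 2 - ⟪ξ, w - z⟫))
      (closedBall z r) :=
    (hφ.mono fun y hy => (hball hy).2.1).add
      (ContinuousOn.lowerSemicontinuousOn (by fun_prop))
  obtain ⟨y, hy, hmin⟩ := hlsc.exists_isMinOn ⟨z, mem_closedBall_self hr.le⟩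
    (isCompact_closedBall z r)
  have hle : φ y + (K * ‖y - z‖ ^ 2 - ⟪ξ, y - z⟫) ≤ φ z := by
    simpa using hmin (mem_closedBall_self hr.le)
  have hKy : K * ‖y - z‖ ≤ c := by
    by_contra! hlt
    have hy₀ : 0 < ‖y - z‖ := pos_of_mul_pos_right (hc.trans hlt) hK.le
    nlinarith [(hball hy).1, hy₀]
  have hyr : y ∈ ball z r := by
    have hKr : K * r = 2 * c := div_mul_cancel₀ _ hr.ne'
    rw [mem_ball_iff_norm]
    nlinarith
  exact ⟨y, (hball hy).2.2, K, hK.le, hKy,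
    hmin.isLocalMin (mem_of_superset (isOpen_ball.mem_nhds hyr) ball_subset_closedBall)⟩

lemma frequently_mem_regSubdiff_of_mem_approxSubdiff [FiniteDimensional ℝ H] {U : Set H}
    (hφ : LowerSemicontinuousOn φ U) (hU : U ∈ 𝓝 z) (hξ : ξ ∈ approxSubdiff φ c z) (hc : 0 < c) :
    ∃ᶠ y in 𝓝 z, (closedBall ξ (2 * c) ∩ regSubdiff φ y).Nonempty := by
  refine nhds_basis_ball.frequently_iff.2 fun ρ hρ => ?_
  obtain ⟨y, hy, K, hK, hKy, hmin⟩ := exists_isLocalMin_add_of_mem_approxSubdiff hφ hU hξ hc hρ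
  refine ⟨y, hy, _, ?_, neg_mem_regSubdiff_of_isLocalMin_add
    (hasGradientAt_mul_norm_sub_sq_sub_inner K ξ z y) hmin⟩
  rw [neg_sub, mem_closedBall_iff_norm, sub_sub_cancel_left, norm_neg, norm_smul,
    Real.norm_of_nonneg (by positivity)]
  linarith

lemma frequently_mem_approxSubdiff_of_mem_limSubdiff [FiniteDimensional ℝ H]
    (hξ : ξ ∈ limSubdiff φ x) (hc : 0 < c) {r : ℝ} (hr : 0 < r) :
    ∃ᶠ y in 𝓝 x, (ball ξ r ∩ approxSubdiff φ c y).Nonempty := by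
  obtain ⟨-, ys, ηs, hy, hη, hmem⟩ := hξ
  have hfst : Tendsto (fun k => (ηs k).fst) atTop (𝓝 ξ) :=
    ((WithLp.continuous_fst 2 H ℝ).tendsto _).comp hη
  have hsnd : Tendsto (fun k => -(ηs k).snd) atTop (𝓝 1) :=
    neg_neg (1 : ℝ) ▸ (((WithLp.continuous_snd 2 H ℝ).tendsto _).comp hη).neg
  have hscaled : Tendsto (fun k => (-(ηs k).snd)⁻¹ • (ηs k).fst) atTop (𝓝 ξ) := by
    simpa using (hsnd.inv₀ one_ne_zero).smul hfst
  refine (((WithLp.continuous_fst 2 H ℝ).tendsto _).comp hy).frequently (Eventually.frequently ?_)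
  filter_upwards [hsnd.eventually_const_lt one_pos, hscaled.eventually (ball_mem_nhds ξ hr)]
    with k hpos hball
  refine ⟨_, hball, smul_mem_approxSubdiff_of_mem_regNormal hpos (α := (ys k).snd) ?_ hc⟩
  rw [neg_neg]
  exact hmem k

end Subgradients

section Scalarization

variable {X Y : Type*} [NormedAddCommGroup X] [InnerProductSpace ℝ X]
  [NormedAddCommGroup Y] [InnerProductSpace ℝ Y] {F : X → Y} {K : NNReal} {U : Set X}
  {x d z ξ : X} {v lam mu : Y} {c : ℝ}

lemma HasHadamardDirDeriv.inner_left (lam : Y) (h : HasHadamardDirDeriv F v x d) :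
    HasHadamardDirDeriv (fun y => ⟪lam, F y⟫) ⟪lam, v⟫ x d := by
  simpa only [HasHadamardDirDeriv, inner_smul_right, inner_sub_right, smul_eq_mul]
    using Tendsto.inner (𝕜 := ℝ) (tendsto_const_nhds (x := lam)) h

lemma mem_approxSubdiff_inner_of_lipschitzOnWith (hF : LipschitzOnWith K F U) (hU : U ∈ 𝓝 z)
    (hξ : ξ ∈ approxSubdiff (fun y => ⟪mu, F y⟫) c z) :
    ξ ∈ approxSubdiff (fun y => ⟪lam, F y⟫) (c + ‖mu - lam‖ * K) z := by
  filter_upwards [hξ, hU] with y hy hyU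
  have hchange : ⟪mu - lam, F y - F z⟫ ≤ ‖mu - lam‖ * (K * ‖y - z‖) :=
    (real_inner_le_norm _ _).trans
      (mul_le_mul_of_nonneg_left (hF.norm_sub_le hyU (mem_of_mem_nhds hU)) (norm_nonneg _))
  simp only [inner_sub_left, inner_sub_right] at hchange hy ⊢
  linarith

lemma frequently_mem_regSubdiff_inner_of_mem_limSubdiff [FiniteDimensional ℝ X]
    (hF : LipschitzOnWith K F U) (hU : U ∈ 𝓝 z) (hξ : ξ ∈ limSubdiff (fun y => ⟪mu, F y⟫) z)
    (hc : ‖mu - lam‖ * K < c) :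
    ∃ᶠ y in 𝓝 z, (ball ξ (2 * c) ∩ regSubdiff (fun w => ⟪lam, F w⟫) y).Nonempty := by
  obtain ⟨ε, hε, hεc⟩ : ∃ ε > 0, 3 * ε = c - ‖mu - lam‖ * K :=
    ⟨(c - ‖mu - lam‖ * K) / 3, by linarith, by ring⟩
  have hlsc : LowerSemicontinuousOn (fun w => ⟪lam, F w⟫) U :=
    (continuousOn_const.inner hF.continuousOn).lowerSemicontinuousOn
  refine frequently_frequently_nhds.1
    (((frequently_mem_approxSubdiff_of_mem_limSubdiff hξ hε hε).and_eventually
      (eventually_mem_nhds_iff.2 hU)).mono ?_)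
  rintro y ⟨⟨ξ', hξ', happrox⟩, hyU⟩
  refine (frequently_mem_regSubdiff_of_mem_approxSubdiff hlsc hyU
    (mem_approxSubdiff_inner_of_lipschitzOnWith hF hyU happrox) (by positivity)).mono fun w => ?_
  exact Nonempty.mono (inter_subset_inter_left _
    (closedBall_subset_ball' (by linarith [mem_ball.1 hξ'])))

theorem mem_dirLimSubdiff_inner_of_frequently_mem_limSubdiff [FiniteDimensional ℝ X]
    {ι : Type*} {l : Filter ι} {xs ξs : ι → X} {lams : ι → Y}
    (hF : LipschitzOnWith K F U) (hU : U ∈ 𝓝 x) (hv : HasHadamardDirDeriv F v x d)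
    (hx : Tendsto xs l (dirNhds x d)) (hlam : Tendsto lams l (𝓝 lam)) (hξ : Tendsto ξs l (𝓝 ξ))
    (h : ∃ᶠ k in l, ξs k ∈ limSubdiff (fun y => ⟪lams k, F y⟫) (xs k)) :
    ξ ∈ dirLimSubdiff (fun y => ⟪lam, F y⟫) x d ⟪lam, v⟫ := by
  refine mem_dirLimSubdiff_of_frequently_mem_regSubdiff (hv.inner_left lam)
    (frequently_mem_dirNhds_prod_nhds hx hξ fun r hr => ?_)
  have hU' : ∀ᶠ k in l, U ∈ 𝓝 (xs k) :=
    (hx.mono_right (dirNhds_le_nhds x d)).eventually (eventually_mem_nhds_iff.2 hU)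
  have hsmall : ∀ᶠ k in l, ‖lams k - lam‖ * K < r / 2 := by
    have : Tendsto (fun k => ‖lams k - lam‖ * (K : ℝ)) l (𝓝 0) := by
      simpa using (hlam.sub_const lam).norm.mul_const (K : ℝ)
    exact this.eventually_lt_const (half_pos hr)
  refine (h.and_eventually (hU'.and hsmall)).mono fun k ⟨hk, hkU, hkr⟩ => ?_
  simpa only [mul_div_cancel₀ r (two_ne_zero' ℝ)]
    using frequently_mem_regSubdiff_inner_of_mem_limSubdiff hF hkU hk hkr

end Scalarization

section Stationarity

variable {X Y : Type*} [NormedAddCommGroup X] [InnerProductSpace ℝ X] [FiniteDimensional ℝ X]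
  [NormedAddCommGroup Y] [InnerProductSpace ℝ Y]

lemma continuousAt_gradient_of_contDiffAt {f : X → ℝ} {x : X} (hf : ContDiffAt ℝ 1 f x) :
    ContinuousAt (gradient f) x :=
  (InnerProductSpace.toDual ℝ X).symm.continuous.continuousAt.comp
    (hf.continuousAt_fderiv one_ne_zero)

theorem stmt12_general [FiniteDimensional ℝ Y] {f : X → ℝ} {F : X → Y} {Γ : Set Y} {x d : X} {v : Y}
    {xk εk : ℕ → X} {lamk δk : ℕ → Y} (hf : ContDiffAt ℝ 1 f x)
    (hLip : ∃ K, ∃ U ∈ 𝓝 x, LipschitzOnWith K F U)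
    (hv : Tendsto (fun t : ℝ => t⁻¹ • (F (x + t • d) - F x)) (𝓝[>] 0) (𝓝 v))
    (hfeas : F x ∈ Γ)
    (hξ : ∀ k, εk k - gradient f (xk k) ∈ limSubdiff (fun y => ⟪lamk k, F y⟫) (xk k))
    (hN : ∀ k, lamk k ∈ limNormal Γ (F (xk k) - δk k))
    (hx : Tendsto xk atTop (𝓝 x)) (hε : Tendsto εk atTop (𝓝 0)) (hne : ∀ k, xk k ≠ x)
    (hdir : Tendsto (fun k => ‖xk k - x‖⁻¹ • (xk k - x)) atTop (𝓝 d))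
    (hδ : Tendsto (fun k => ‖xk k - x‖⁻¹ • δk k) atTop (𝓝 0))
    (hbd : ∃ M : ℝ, ∀ k, ‖lamk k‖ ≤ M) :
    ∃ lam : Y, -gradient f x ∈ dirLimSubdiff (fun y => ⟪lam, F y⟫) x d ⟪lam, v⟫ ∧
      lam ∈ dirLimNormal Γ (F x) v := by
  obtain ⟨K, U, hU, hF⟩ := hLip
  obtain ⟨M, hM⟩ := hbd
  have hv' := hasHadamardDirDeriv_of_lipschitzOnWith hF hU hv
  have hball : ∀ᶠ k in atTop, lamk k ∈ closedBall 0 M :=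
    Eventually.of_forall fun k => mem_closedBall_zero_iff.2 (hM k)
  obtain ⟨lam, -, hcluster⟩ :=
    (isCompact_closedBall (0 : Y) M).exists_mapClusterPt_of_frequently hball.frequently
  obtain ⟨l, hl, hlam⟩ := mapClusterPt_iff_ultrafilter.1 hcluster
  have ht : Tendsto (fun k => ‖xk k - x‖) atTop (𝓝[>] 0) :=
    tendsto_nhdsWithin_iff.2 ⟨by simpa using (hx.sub_const x).norm,
      Eventually.of_forall fun k => norm_sub_pos_iff.2 (hne k)⟩
  have hgrad : Tendsto (fun k => εk k - gradient f (xk k)) atTop (𝓝 (-gradient f x)) := by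
    simpa using hε.sub ((continuousAt_gradient_of_contDiffAt hf).tendsto.comp hx)
  have hFx : Tendsto (fun k => F (xk k) - δk k) atTop (dirNhds (F x) v) := by
    refine tendsto_dirNhds ht ?_
    simpa only [← smul_sub, sub_right_comm, sub_zero] using (hv'.tendsto_comp ht hdir).sub hδ
  exact ⟨lam,
    mem_dirLimSubdiff_inner_of_frequently_mem_limSubdiff hF hU hv'
      ((tendsto_dirNhds ht hdir).mono_left hl) hlam (hgrad.mono_left hl)
      (Eventually.of_forall hξ).frequently,
    mem_dirLimNormal_of_frequently_mem_limNormal hfeas (hFx.mono_left hl) hlam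
      (Eventually.of_forall hN).frequently⟩

end Stationarity

/-- A point admitting a directionally AM-stationary sequence with bounded multipliers
is M-stationary in that direction. -/
theorem stmt12 {n l : ℕ}
    (f : Eu n → ℝ) (hf : ContDiff ℝ 1 f)
    (F : Eu n → Eu l) (F' : Eu n → Eu n → Eu l)
    (hLip : LocallyLipschitz F) (hF' : IsDirDeriv F F')
    (Γ : Set (Eu l)) (hΓne : Γ.Nonempty) (hΓcl : IsClosed Γ)
    (x : Eu n) (hfeas : F x ∈ Γ)
    (d : Eu n) (hd : d ∈ critCone f F F' Γ x) (hd1 : ‖d‖ = 1)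
    (xk : ℕ → Eu n) (lamk δk : ℕ → Eu l) (εk : ℕ → Eu n)
    (hAM : AMSeqDir f F Γ x xk lamk δk εk d)
    (hbd : ∃ M : ℝ, ∀ k, ‖lamk k‖ ≤ M) :
    MStatDir f F F' Γ x d := by
  obtain ⟨⟨hξ, hN, hx, -, hε⟩, hne, hdir, hδ, -, -⟩ := hAM
  exact stmt12_general hf.contDiffAt (hLip x) (hF' x d) hfeas hξ hN hx hε hne hdir hδ hbd

end
end
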